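/- arXiv:1012.4784 — 2 statements merged into one kernel-verified Lean document; each statement's English description precedes it below -/
import Mathlib

section
/- Let q ∈ (0,1), let K : Fin 4 → ℕ, let 𝒞 ≥ 0 be a real constant, and let 𝒥 ∈ ℕ. For each i ∈ Fin 4 let Λ_i : ℕ × ℕ → ℂ be a family of complex numbers such that |Λ_i(I,M)| ≤ 𝒞·I·q^{2I} for all I ≥ 𝒥 and all M ∈ ℕ. Let C : ℕ × (Fin 4 → ℕ) → ℂ satisfy: (i) C(I,M) = 0 whenever |M_i − I| > K_i for some i; (ii) |C(I,M)| ≤ [2I+1]_q·(2I+1)³·∏_{i}(2M_i+1) for all arguments. Then the family (I, M) ↦ [2I+1]_q · C(I,M) · ∏_{i∈Fin 4} Λ_i(I, M_i) is absolutely summable over ℕ × (Fin 4 → ℕ). -/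
/-!
For `0 < q < 1` the q-integer satisfies `[2I+1]_q ≤ q^{-2I} / (1 - q²)` (`qint_odd_nonneg_le`). The
summand contains two such factors, one explicit and one from the bound on `C`, so they contribute
growth `q^{-4I}`, whereas the four factors `Λ_i` decay like `I⁴ q^{8I}`. For fixed `I` only the
finitely many `M` with `|M_i - I| ≤ K_i` contribute: at most `∏ (2K_i + 1)` of them, and for these
`2M_i + 1` is at most linear in `I`. Hence the sum over `M` is at most a constant times
`(I+1)^11 q^{4I}` once `I ≥ 𝒥` (`term_le`), which is summable in `I`.
-/

/-- The q-integer `[n]_q = (q^n - q^{-n})/(q - q⁻¹)`. -/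
noncomputable def qint (q : ℝ) (n : ℕ) : ℝ :=
  (q ^ (n : ℤ) - q ^ (-(n : ℤ))) / (q - q⁻¹)

lemma qint_odd_nonneg_le (q : ℝ) (hq0 : 0 < q) (hq1 : q < 1) (I : ℕ) :
    0 ≤ qint q (2 * I + 1) ∧ qint q (2 * I + 1) * q ^ (2 * I) ≤ (1 - q ^ 2)⁻¹ := by
  have h2 : 0 < 1 - q ^ 2 := by nlinarith
  have hx : 0 < q ^ (2 * I) := by positivity
  have hx1 : q ^ (2 * I) ≤ 1 := pow_le_one₀ hq0.le hq1.le
  have key : qint q (2 * I + 1) * q ^ (2 * I) =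
      (1 - (q ^ (2 * I) * q) ^ 2) * (1 - q ^ 2)⁻¹ := by
    have hd : q - q⁻¹ ≠ 0 := by
      have : 1 < q⁻¹ := (one_lt_inv₀ hq0).2 hq1
      linarith
    rw [qint, zpow_neg, zpow_natCast, pow_succ]
    generalize q ^ (2 * I) = x at *
    have hd' : q ^ 2 - 1 ≠ 0 := by linarith
    field_simp
    ring
  have hy0 : 0 ≤ q ^ (2 * I) * q := by positivity
  have hy1 : q ^ (2 * I) * q ≤ 1 := mul_le_one₀ hx1 hq0.le hq1.le
  have hinv : 0 < (1 - q ^ 2)⁻¹ := inv_pos.2 h2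
  constructor
  · refine nonneg_of_mul_nonneg_left (b := q ^ (2 * I)) ?_ hx
    rw [key]
    exact mul_nonneg (by nlinarith) hinv.le
  · rw [key]
    exact mul_le_of_le_one_left hinv.le (by nlinarith)

/-- The summand estimate in abstract form: `a` is the q-integer, `Q` is `q^{2I}`, `c` is the norm
of `C (I, M)`, and `l i` is the norm of `Λ i (I, M i)`. -/
lemma term_le (a Q b x c 𝒞 : ℝ) (K : Fin 4 → ℕ) (m l : Fin 4 → ℝ)
    (ha : 0 ≤ a) (hQ : 0 ≤ Q) (hab : a * Q ≤ b) (hx : 0 ≤ x) (h𝒞 : 0 ≤ 𝒞)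
    (hm0 : ∀ i, 0 ≤ m i) (hm : ∀ i, m i ≤ x + K i)
    (hc : c ≤ a * (2 * x + 1) ^ 3 * ∏ i, (2 * m i + 1))
    (hl0 : ∀ i, 0 ≤ l i) (hl : ∀ i, l i ≤ 𝒞 * x * Q) :
    a * c * ∏ i, l i ≤
      b ^ 2 * 8 * (∏ i, (2 * (2 * (K i : ℝ) + 1))) * 𝒞 ^ 4 * ((x + 1) ^ 11 * Q ^ 2) := by
  have h1 : ∏ i, (2 * m i + 1) ≤ (∏ i, (2 * (2 * (K i : ℝ) + 1))) * (x + 1) ^ 4 := by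
    have : (x + 1) ^ 4 = ∏ _i : Fin 4, (x + 1) := by simp
    rw [this, ← Finset.prod_mul_distrib]
    refine Finset.prod_le_prod (fun i _ => by linarith [hm0 i]) fun i _ => ?_
    have hK : (0 : ℝ) ≤ K i := Nat.cast_nonneg _
    nlinarith [hm i, mul_nonneg hK hx]
  have h2 : ∏ i, l i ≤ (𝒞 * (x + 1) * Q) ^ 4 := by
    have : (𝒞 * (x + 1) * Q) ^ 4 = ∏ _i : Fin 4, (𝒞 * (x + 1) * Q) := by simp
    rw [this]
    refine Finset.prod_le_prod (fun i _ => hl0 i) fun i _ => (hl i).trans ?_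
    gcongr
    linarith
  have h3 : (2 * x + 1) ^ 3 ≤ 8 * (x + 1) ^ 3 := by
    have : 8 * (x + 1) ^ 3 = (2 * x + 2) ^ 3 := by ring
    rw [this]
    gcongr
    norm_num
  have hP : 0 ≤ ∏ i, (2 * (2 * (K i : ℝ) + 1)) := by positivity
  have hM : 0 ≤ ∏ i, (2 * m i + 1) :=
    Finset.prod_nonneg fun i _ => by linarith [hm0 i]
  have hL : 0 ≤ ∏ i, l i := Finset.prod_nonneg fun i _ => hl0 i
  calc a * c * ∏ i, l i
      ≤ a * (a * (8 * (x + 1) ^ 3) * ((∏ i, (2 * (2 * (K i : ℝ) + 1))) * (x + 1) ^ 4)) *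
        (𝒞 * (x + 1) * Q) ^ 4 := by
        have hc' := hc.trans (mul_le_mul (mul_le_mul_of_nonneg_left h3 ha) h1 hM (by positivity))
        exact mul_le_mul (mul_le_mul_of_nonneg_left hc' ha) h2 hL (by positivity)
    _ = (a * Q) ^ 2 * 8 * (∏ i, (2 * (2 * (K i : ℝ) + 1))) * 𝒞 ^ 4 *
        ((x + 1) ^ 11 * Q ^ 2) := by ring
    _ ≤ _ := by gcongr

/-- The finite set of `M` with `|M i - I| ≤ K i` for all `i`; the truncated subtraction only
discards the negative integers. -/
def window (K : Fin 4 → ℕ) (I : ℕ) : Finset (Fin 4 → ℕ) :=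
  Fintype.piFinset fun i => Finset.Icc (I - K i) (I + K i)

lemma card_window_le (K : Fin 4 → ℕ) (I : ℕ) :
    ((window K I).card : ℝ) ≤ ∏ i, (2 * (K i : ℝ) + 1) := by
  have : (window K I).card ≤ ∏ i, (2 * K i + 1) := by
    rw [window, Fintype.card_piFinset]
    refine Finset.prod_le_prod' fun i _ => ?_
    rw [Nat.card_Icc]
    omega
  exact_mod_cast this

lemma summable_succ_pow_mul (q : ℝ) (hq0 : 0 < q) (hq1 : q < 1) :
    Summable fun I : ℕ => ((I : ℝ) + 1) ^ 11 * (q ^ (2 * I)) ^ 2 := by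
  have hlt : ‖q ^ 4‖ < 1 := by
    rw [Real.norm_of_nonneg (by positivity)]
    exact pow_lt_one₀ hq0.le hq1 (by norm_num)
  have h : Summable fun I : ℕ => ((I + 1 : ℕ) : ℝ) ^ 11 * (q ^ 4) ^ (I + 1) :=
    (summable_nat_add_iff (f := fun n : ℕ => (n : ℝ) ^ 11 * (q ^ 4) ^ n) 1).2
      (summable_pow_mul_geometric_of_norm_lt_one 11 hlt)
  have hq : (q ^ 4) ≠ 0 := pow_ne_zero _ hq0.ne'
  have heq : ∀ I : ℕ, ((I + 1 : ℕ) : ℝ) ^ 11 * (q ^ 4) ^ (I + 1) * (q ^ 4)⁻¹ =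
      ((I : ℝ) + 1) ^ 11 * (q ^ (2 * I)) ^ 2 := by
    intro I
    have : (q ^ (2 * I)) ^ 2 = (q ^ 4) ^ I := by
      rw [← pow_mul, ← pow_mul]
      congr 1
      omega
    rw [this, pow_succ (q ^ 4) I, mul_assoc, mul_inv_cancel_right₀ hq, Nat.cast_succ]
  exact (h.mul_right (q ^ 4)⁻¹).congr heq

theorem eprl_intertwiner_summable (q : ℝ) (hq0 : 0 < q) (hq1 : q < 1)
    (K : Fin 4 → ℕ) (𝒞 : ℝ) (h𝒞 : 0 ≤ 𝒞) (𝒥 : ℕ)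
    (Λ : Fin 4 → ℕ × ℕ → ℂ)
    (hΛ : ∀ i : Fin 4, ∀ I M : ℕ, 𝒥 ≤ I →
      ‖Λ i (I, M)‖ ≤ 𝒞 * (I : ℝ) * q ^ (2 * I))
    (C : ℕ × (Fin 4 → ℕ) → ℂ)
    (hC0 : ∀ I : ℕ, ∀ M : Fin 4 → ℕ,
      (∃ i : Fin 4, (K i : ℤ) < |(M i : ℤ) - (I : ℤ)|) → C (I, M) = 0)
    (hCb : ∀ I : ℕ, ∀ M : Fin 4 → ℕ,
      ‖C (I, M)‖ ≤ qint q (2 * I + 1) * (2 * (I : ℝ) + 1) ^ 3 *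
        ∏ i : Fin 4, (2 * (M i : ℝ) + 1)) :
    Summable (fun p : ℕ × (Fin 4 → ℕ) =>
      ‖(qint q (2 * p.1 + 1) : ℂ) * C p * ∏ i : Fin 4, Λ i (p.1, p.2 i)‖) := by
  have hzero : ∀ I, ∀ M ∉ window K I,
      ‖(qint q (2 * I + 1) : ℂ) * C (I, M) * ∏ i : Fin 4, Λ i (I, M i)‖ = 0 := by
    intro I M hM
    have : ∃ i : Fin 4, (K i : ℤ) < |(M i : ℤ) - (I : ℤ)| := by
      by_contra! h
      refine hM (Fintype.mem_piFinset.2 fun i => Finset.mem_Icc.2 ?_)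
      have := abs_le.1 (h i)
      omega
    simp [hC0 I M this]
  rw [summable_prod_of_nonneg fun _ => norm_nonneg _]
  refine ⟨fun I => summable_of_ne_finset_zero (s := window K I) (hzero I), ?_⟩
  -- Only the tail `I ≥ 𝒥` is controlled by the decay hypothesis, and only the tail matters.
  refine Summable.of_norm_bounded_eventually_nat
    ((summable_succ_pow_mul q hq0 hq1).mul_left
      ((∏ i, (2 * (K i : ℝ) + 1)) *
        (((1 - q ^ 2)⁻¹) ^ 2 * 8 * (∏ i, (2 * (2 * (K i : ℝ) + 1))) * 𝒞 ^ 4)))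
    (Filter.eventually_atTop.2 ⟨𝒥, fun I hI => ?_⟩)
  obtain ⟨ha, hab⟩ := qint_odd_nonneg_le q hq0 hq1 I
  rw [Real.norm_of_nonneg (tsum_nonneg fun _ => norm_nonneg _), tsum_eq_sum (hzero I), mul_assoc]
  refine (Finset.sum_le_card_nsmul _ _
    (((1 - q ^ 2)⁻¹) ^ 2 * 8 * (∏ i, (2 * (2 * (K i : ℝ) + 1))) * 𝒞 ^ 4 *
      (((I : ℝ) + 1) ^ 11 * (q ^ (2 * I)) ^ 2)) fun M hM => ?_).trans ?_
  · rw [norm_mul, norm_mul, norm_prod, Complex.norm_real, Real.norm_of_nonneg ha]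
    refine term_le _ _ _ _ _ _ K (fun i => (M i : ℝ)) _ ha (by positivity) hab
      (Nat.cast_nonneg I) h𝒞 (fun i => Nat.cast_nonneg _) (fun i => ?_) (hCb I M)
      (fun i => norm_nonneg _) (fun i => hΛ i I (M i) hI)
    exact_mod_cast (Finset.mem_Icc.1 (Fintype.mem_piFinset.1 hM i)).2
  · rw [nsmul_eq_mul]
    exact mul_le_mul_of_nonneg_right (card_window_le K I) (by positivity)
end

section
/- Let q ∈ (0,1), let c, d ∈ ℕ and let C ≥ 0 be a real constant. Suppose S : (Fin 10 → ℕ) × (Fin 10 → ℕ) × ℕ → ℂ, with arguments written (N, M, P), satisfies: (i) S(N,M,P) = 0 unless |M_i − N_i| ≤ c for every i ∈ Fin 10 and P ≤ N_0 + c; (ii) |S(N,M,P)| ≤ C·(1 + P + ∑_{i}(N_i + M_i))^d · ∏_{i∈Fin 10} √([2N_i+1]_q) · q^{2N_i}. Then S is absolutely summable over (Fin 10 → ℕ) × (Fin 10 → ℕ) × ℕ. -/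
theorem one_add_sum_le_prod {ι : Type*} (s : Finset ι) (a : ι → ℝ) (ha : ∀ i, 0 ≤ a i) :
    1 + ∑ i ∈ s, a i ≤ ∏ i ∈ s, (1 + a i) := by
  classical
  induction s using Finset.induction_on with
  | empty => simp
  | insert i s hi ih =>
    rw [Finset.sum_insert hi, Finset.prod_insert hi]
    have h := Finset.sum_nonneg (s := s) (fun j _ => ha j)
    nlinarith [ha i, mul_nonneg (ha i) h, mul_le_mul_of_nonneg_left ih (ha i)]

theorem summable_pi_prod {f : ℕ → ℝ} (hf : Summable f) (hf0 : ∀ n, 0 ≤ f n) (k : ℕ) :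
    Summable (fun N : Fin k → ℕ => ∏ i, f (N i)) := by
  induction k with
  | zero => exact Summable.of_finite
  | succ k ih =>
    rw [← (Fin.consEquiv (fun _ : Fin (k + 1) => ℕ)).summable_iff]
    have h := hf.mul_of_nonneg ih hf0 (fun N => Finset.prod_nonneg fun i _ => hf0 (N i))
    refine h.congr fun x => ?_
    simp [Fin.consEquiv, Fin.prod_univ_succ]

theorem summable_one_add_pow_mul_geometric (d : ℕ) {r : ℝ} (hr0 : 0 < r) (hr1 : r < 1) :
    Summable (fun n : ℕ => (1 + (n : ℝ)) ^ d * r ^ n) := by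
  have h := summable_pow_mul_geometric_of_norm_lt_one (R := ℝ) d (r := r)
    (by rwa [Real.norm_of_nonneg hr0.le])
  refine (((summable_nat_add_iff 1).2 h).mul_right r⁻¹).congr fun n => ?_
  push_cast
  field_simp
  ring

/-- Since `[2n+1]_q = (q^{-2n} - q^{2n+2}) / (1 - q²) ≤ q^{-2n} / (1 - q²)`, the square root costs
only half of the decay of `q^{2n}`. -/
theorem sqrt_qint_mul_le {q : ℝ} (hq0 : 0 < q) (hq1 : q < 1) (n : ℕ) :
    Real.sqrt (qint q (2 * n + 1)) * q ^ (2 * n) ≤ Real.sqrt (1 / (1 - q ^ 2)) * q ^ n := by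
  have hq2 : 0 < 1 - q ^ 2 := by nlinarith
  have ht : 0 < q ^ n := pow_pos hq0 n
  have hx : qint q (2 * n + 1) = (1 - (q ^ n) ^ 4 * q ^ 2) * (1 / (1 - q ^ 2)) / (q ^ n) ^ 2 := by
    have hm : q ^ (2 * n + 1) = (q ^ n) ^ 2 * q := by ring
    have hd : q - q⁻¹ = -((1 - q ^ 2) / q) := by field_simp; ring
    unfold qint
    rw [zpow_neg, zpow_natCast, hm, hd]
    generalize q ^ n = t at ht
    field_simp
    ring
  have h1 : qint q (2 * n + 1) ≤ 1 / (1 - q ^ 2) / (q ^ n) ^ 2 := by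
    rw [hx]
    gcongr
    have : 0 ≤ 1 / (1 - q ^ 2) := by positivity
    have h4 : 0 ≤ (q ^ n) ^ 4 * q ^ 2 := by positivity
    nlinarith [mul_nonneg h4 this]
  have h2 : Real.sqrt (qint q (2 * n + 1)) ≤ Real.sqrt (1 / (1 - q ^ 2)) / q ^ n := by
    refine (Real.sqrt_le_sqrt h1).trans_eq ?_
    rw [Real.sqrt_div' _ (by positivity), Real.sqrt_sq ht.le]
  calc Real.sqrt (qint q (2 * n + 1)) * q ^ (2 * n)
      ≤ Real.sqrt (1 / (1 - q ^ 2)) / q ^ n * q ^ (2 * n) := by gcongr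
    _ = _ := by rw [two_mul, pow_add]; field_simp

theorem four_simplex_amplitude_summable (q : ℝ) (hq0 : 0 < q) (hq1 : q < 1)
    (c d : ℕ) (C : ℝ) (hC : 0 ≤ C)
    (S : (Fin 10 → ℕ) × (Fin 10 → ℕ) × ℕ → ℂ)
    (hsupp : ∀ N M : Fin 10 → ℕ, ∀ P : ℕ,
      ¬((∀ i : Fin 10, |(M i : ℤ) - (N i : ℤ)| ≤ (c : ℤ)) ∧ P ≤ N 0 + c) →
        S (N, M, P) = 0)
    (hbound : ∀ N M : Fin 10 → ℕ, ∀ P : ℕ,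
      ‖S (N, M, P)‖ ≤
        C * (1 + (P : ℝ) + ∑ i : Fin 10, ((N i : ℝ) + (M i : ℝ))) ^ d *
          ∏ i : Fin 10, Real.sqrt (qint q (2 * N i + 1)) * q ^ (2 * N i)) :
    Summable (fun x : (Fin 10 → ℕ) × (Fin 10 → ℕ) × ℕ => ‖S x‖) := by
  obtain ⟨r, hr0, hr1, hrq⟩ : ∃ r : ℝ, 0 < r ∧ r < 1 ∧ r ^ 3 = q := by
    refine ⟨q ^ (1 / 3 : ℝ), by positivity, Real.rpow_lt_one hq0.le hq1 (by norm_num), ?_⟩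
    rw [← Real.rpow_natCast, ← Real.rpow_mul hq0.le]
    norm_num
  set K : ℝ := Real.sqrt (1 / (1 - q ^ 2)) with hK
  have hK0 : 0 ≤ K := Real.sqrt_nonneg _
  set f : ℕ → ℝ := fun n => (1 + (n : ℝ)) ^ d * r ^ n with hf
  have hf0 : ∀ n, 0 ≤ f n := fun n => by simp only [hf]; positivity
  have hfs : Summable f := summable_one_add_pow_mul_geometric d hr0 hr1
  have hF := summable_pi_prod hfs hf0 10
  have hF0 : ∀ N : Fin 10 → ℕ, 0 ≤ ∏ i, f (N i) := fun N => Finset.prod_nonneg fun i _ => hf0 _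
  have hG := hF.mul_of_nonneg (hF.mul_of_nonneg hfs hF0 hf0) hF0
    (fun x => mul_nonneg (hF0 x.1) (hf0 x.2))
  refine Summable.of_nonneg_of_le (fun _ => norm_nonneg _) ?_
    (hG.mul_left (C * K ^ 10 / r ^ (11 * c)))
  rintro ⟨N, M, P⟩
  by_cases hs : (∀ i : Fin 10, |(M i : ℤ) - (N i : ℤ)| ≤ (c : ℤ)) ∧ P ≤ N 0 + c
  swap
  · rw [hsupp N M P hs, norm_zero]
    exact mul_nonneg (by positivity) (mul_nonneg (hF0 _) (mul_nonneg (hF0 _) (hf0 _)))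
  obtain ⟨hM, hP⟩ := hs
  have hprod : ∏ i : Fin 10, Real.sqrt (qint q (2 * N i + 1)) * q ^ (2 * N i)
      ≤ K ^ 10 * r ^ (3 * ∑ i, N i) := by
    calc _ ≤ ∏ i : Fin 10, K * q ^ N i :=
          Finset.prod_le_prod (fun i _ => by positivity) fun i _ => sqrt_qint_mul_le hq0 hq1 _
      _ = _ := by
          rw [Finset.prod_mul_distrib, Finset.prod_const, Finset.prod_pow_eq_pow_sum, pow_mul, hrq]
          simp
  have hexp : P + ∑ i, N i + ∑ i, M i ≤ 3 * ∑ i, N i + 11 * c := by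
    have h1 : ∑ i, M i ≤ ∑ i : Fin 10, (N i + c) :=
      Finset.sum_le_sum fun i _ => by have := abs_le.1 (hM i); omega
    have h2 : N 0 ≤ ∑ i, N i := Finset.single_le_sum (fun i _ => Nat.zero_le (N i)) (by simp)
    simp only [Finset.sum_add_distrib, Finset.sum_const, Finset.card_univ, Fintype.card_fin,
      smul_eq_mul] at h1
    omega
  have hgeom : r ^ (3 * ∑ i, N i) ≤ r ^ P * r ^ (∑ i, N i) * r ^ (∑ i, M i) / r ^ (11 * c) := by
    rw [le_div_iff₀ (by positivity), ← pow_add, ← pow_add, ← pow_add]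
    exact pow_le_pow_of_le_one hr0.le hr1.le hexp
  have hpoly : 1 + (P : ℝ) + ∑ i : Fin 10, ((N i : ℝ) + (M i : ℝ))
      ≤ (1 + P) * ((∏ i, (1 + (N i : ℝ))) * ∏ i, (1 + (M i : ℝ))) := by
    have hN := one_add_sum_le_prod Finset.univ (fun i => (N i : ℝ)) fun i => by positivity
    have hM' := one_add_sum_le_prod Finset.univ (fun i => (M i : ℝ)) fun i => by positivity
    have hN0 : (0 : ℝ) ≤ ∑ i, (N i : ℝ) := by positivity
    have hM0 : (0 : ℝ) ≤ ∑ i, (M i : ℝ) := by positivity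
    have hP0 : (0 : ℝ) ≤ P := by positivity
    rw [Finset.sum_add_distrib]
    calc _ ≤ (1 + (P : ℝ)) * ((1 + ∑ i, (N i : ℝ)) * (1 + ∑ i, (M i : ℝ))) := by
          nlinarith [mul_nonneg hN0 hM0, mul_nonneg hP0 hN0, mul_nonneg hP0 hM0,
            mul_nonneg hP0 (mul_nonneg hN0 hM0)]
      _ ≤ _ := by gcongr
  calc ‖S (N, M, P)‖ ≤ _ := hbound N M P
    _ ≤ C * ((1 + P) * ((∏ i, (1 + (N i : ℝ))) * ∏ i, (1 + (M i : ℝ)))) ^ d *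
        (K ^ 10 * (r ^ P * r ^ (∑ i, N i) * r ^ (∑ i, M i) / r ^ (11 * c))) := by
      have h := hprod.trans (mul_le_mul_of_nonneg_left hgeom (by positivity : 0 ≤ K ^ 10))
      gcongr
    _ = _ := by
      simp only [hf, Finset.prod_mul_distrib, Finset.prod_pow, Finset.prod_pow_eq_pow_sum, mul_pow]
      ring
end
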